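/- As an abelian group (i.e., forgetting the R-module structure), Y is isomorphic to the direct sum ⊕_{j∈ℕ} ℤ/p^{j+1}, via an isomorphism carrying the image of b_j to a generator of the summand ℤ/p^{j+1}. -/

import Mathlib

/-!
Write `v` for the polynomial variable. The relations give `v ^ k • b_j = p ^ k • b_{j+k}` in `Y`,
so `p ^ (n+1) • b_n = p • v ^ n • b_0 = 0`. Over `ℤ_p` the
module therefore splits by the total degree `n = j + k` into cyclic pieces generated by `b_n`, of
order `p ^ (n+1)`, and `ℤ_p / p ^ (n+1) = ℤ / p ^ (n+1)`.

Concretely, `toSum : F → ⨁ ZMod (p ^ (n+1))`, `c v ^ k b_j ↦ p ^ k c` in degree `j + k`, kills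
the relations, hence descends to `Y` (`fromY`); and `toY`, which sends the `n`-th unit to `b_n`,
is a section of `fromY`. Moreover `toY` is surjective (`toY_surjective`) because `ℤ` is dense in `ℤ_p` and `b_n` is
`p`-power torsion. So `fromY` is an isomorphism that sends `b_n` to the unit of the `n`-th summand.
-/

noncomputable section

/-- `R = ℤ_p[v]`, the polynomial ring over the `p`-adic integers. -/
abbrev R (p : ℕ) [Fact p.Prime] : Type := Polynomial (PadicInt p)

/-- `F = ⊕_{j ∈ ℕ} R·b_j`, the free `R`-module on generators `b_j = single j 1`. -/
abbrev F (p : ℕ) [Fact p.Prime] : Type := ℕ →₀ R p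

/-- The relations `p·b_0` and `p·b_j - v·b_{j-1}` for `j ≥ 1`. -/
def rel (p : ℕ) [Fact p.Prime] : ℕ → F p
  | 0 => Finsupp.single 0 (p : R p)
  | (j + 1) => Finsupp.single (j + 1) (p : R p) - Finsupp.single j (Polynomial.X : R p)

/-- `Y`, the quotient of `F` by the submodule generated by the relations. -/
abbrev Y (p : ℕ) [Fact p.Prime] : Type :=
  F p ⧸ Submodule.span (R p) (Set.range (rel p))

/-- The image of the generator `b_j` in `Y`. -/
def bY (p : ℕ) [Fact p.Prime] (j : ℕ) : Y p :=
  Submodule.Quotient.mk (Finsupp.single j (1 : R p))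

open DirectSum

/-- A `p`-adic integer `c` reduced modulo `p ^ (n+1)` and placed in the `n`-th summand. -/
def place (p : ℕ) [Fact p.Prime] (n : ℕ) :
    PadicInt p →+ (⨁ j : ℕ, ZMod (p ^ (j + 1))) :=
  (DirectSum.of (fun j : ℕ => ZMod (p ^ (j + 1))) n).comp
    (PadicInt.toZModPow (p := p) (n + 1)).toAddMonoidHom

/-- The additive map on the free module with `c v ^ k b_j ↦ p ^ k c` in degree `j + k`. -/
def toSum (p : ℕ) [Fact p.Prime] : F p →+ (⨁ j : ℕ, ZMod (p ^ (j + 1))) :=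
  Finsupp.liftAddHom fun j =>
    (Polynomial.lsum (R := ℕ) fun k =>
      ((place p (j + k)).comp
        (AddMonoidHom.mulLeft ((p : PadicInt p) ^ k))).toNatLinearMap).toAddMonoidHom

lemma toSum_single_monomial (p : ℕ) [Fact p.Prime] (j k : ℕ) (c : PadicInt p) :
    toSum p (Finsupp.single j (Polynomial.monomial k c)) =
      place p (j + k) ((p : PadicInt p) ^ k * c) := by
  simp [toSum, Polynomial.lsum_apply, Polynomial.sum_monomial_index]

lemma toSum_smul_rel (p : ℕ) [Fact p.Prime] (r : R p) (j : ℕ) : toSum p (r • rel p j) = 0 := by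
  induction r using Polynomial.induction_on' with
  | add f g hf hg => rw [add_smul, map_add, hf, hg, add_zero]
  | monomial k c =>
    have hp : Polynomial.monomial k c * (p : R p) = Polynomial.monomial k (c * p) := by
      rw [← Polynomial.C_eq_natCast, Polynomial.monomial_mul_C]
    cases j with
    | zero =>
      rw [rel, Finsupp.smul_single, smul_eq_mul, hp, toSum_single_monomial, place]
      have h : (p : ZMod (p ^ (0 + k + 1))) ^ k * p = 0 := by
        rw [← pow_succ, ← Nat.cast_pow, zero_add, ZMod.natCast_self]
      have h2 : PadicInt.toZModPow (p := p) (0 + k + 1) ((p : PadicInt p) ^ k * (c * p)) = 0 := by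
        rw [map_mul, map_mul, map_pow, map_natCast, mul_left_comm, h, mul_zero]
      simp only [AddMonoidHom.comp_apply, RingHom.toAddMonoidHom_eq_coe, AddMonoidHom.coe_coe, h2,
        map_zero]
    | succ j =>
      rw [rel, smul_sub, Finsupp.smul_single, Finsupp.smul_single, smul_eq_mul, smul_eq_mul, hp,
        Polynomial.monomial_mul_X, map_sub, toSum_single_monomial, toSum_single_monomial,
        show j + 1 + k = j + (k + 1) by omega, sub_eq_zero]
      congr 1
      ring

lemma toSum_eq_zero (p : ℕ) [Fact p.Prime] (x : F p)
    (hx : x ∈ Submodule.span (R p) (Set.range (rel p))) : toSum p x = 0 := by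
  induction hx using Submodule.closure_induction with
  | zero => exact map_zero _
  | add x y _ _ hx hy => rw [map_add, hx, hy, add_zero]
  | smul_mem r x hx =>
    obtain ⟨j, rfl⟩ := hx
    exact toSum_smul_rel p r j

/-- The map `Y → ⨁ ZMod (p ^ (n+1))` induced by `toSum`. -/
def fromY (p : ℕ) [Fact p.Prime] : Y p →+ (⨁ j : ℕ, ZMod (p ^ (j + 1))) :=
  QuotientAddGroup.lift (Submodule.span (R p) (Set.range (rel p))).toAddSubgroup (toSum p)
    fun x hx => toSum_eq_zero p x hx

lemma fromY_bY (p : ℕ) [Fact p.Prime] (j : ℕ) :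
    fromY p (bY p j) = DirectSum.of (fun j : ℕ => ZMod (p ^ (j + 1))) j 1 := by
  change toSum p (Finsupp.single j (1 : R p)) = _
  rw [← Polynomial.monomial_zero_one, toSum_single_monomial]
  simp [place]

lemma p_smul_bY_zero (p : ℕ) [Fact p.Prime] : (p : R p) • bY p 0 = 0 := by
  rw [bY, ← Submodule.Quotient.mk_smul, Submodule.Quotient.mk_eq_zero]
  refine Submodule.subset_span ⟨0, ?_⟩
  simp [rel]

lemma p_smul_bY_succ (p : ℕ) [Fact p.Prime] (j : ℕ) :
    (p : R p) • bY p (j + 1) = (Polynomial.X : R p) • bY p j := by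
  rw [bY, bY, ← Submodule.Quotient.mk_smul, ← Submodule.Quotient.mk_smul, Submodule.Quotient.eq]
  refine Submodule.subset_span ⟨j + 1, ?_⟩
  simp [rel]

lemma X_pow_smul_bY (p : ℕ) [Fact p.Prime] (k j : ℕ) :
    (Polynomial.X ^ k : R p) • bY p j = (p : R p) ^ k • bY p (j + k) := by
  induction k with
  | zero => simp
  | succ k ih =>
    rw [pow_succ', mul_smul, ih, smul_comm, ← p_smul_bY_succ, smul_smul, ← pow_succ, add_assoc]

lemma p_pow_smul_bY (p : ℕ) [Fact p.Prime] (n : ℕ) : (p : R p) ^ (n + 1) • bY p n = 0 := by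
  have h := X_pow_smul_bY p n 0
  rw [zero_add] at h
  rw [pow_succ', mul_smul, ← h, smul_comm, p_smul_bY_zero, smul_zero]

/-- The map `⨁ ZMod (p ^ (n+1)) → Y` sending the unit of the `n`-th summand to `b_n`. -/
def toY (p : ℕ) [Fact p.Prime] : (⨁ j : ℕ, ZMod (p ^ (j + 1))) →+ Y p :=
  DirectSum.toAddMonoid fun n =>
    ZMod.lift (p ^ (n + 1)) ⟨zmultiplesHom (Y p) (bY p n), by
      rw [zmultiplesHom_apply, natCast_zsmul, ← Nat.cast_smul_eq_nsmul (R p), Nat.cast_pow,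
        p_pow_smul_bY]⟩

lemma toY_of_intCast (p : ℕ) [Fact p.Prime] (n : ℕ) (z : ℤ) :
    toY p (DirectSum.of (fun j : ℕ => ZMod (p ^ (j + 1))) n (z : ZMod (p ^ (n + 1))))
      = z • bY p n := by
  rw [toY, DirectSum.toAddMonoid_of, ZMod.lift_coe, zmultiplesHom_apply]

lemma fromY_toY (p : ℕ) [Fact p.Prime] (x : ⨁ j : ℕ, ZMod (p ^ (j + 1))) :
    fromY p (toY p x) = x := by
  induction x using DirectSum.induction_on with
  | zero => simp
  | add x y hx hy => rw [map_add, map_add, hx, hy]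
  | of n a =>
    obtain ⟨z, rfl⟩ := ZMod.intCast_surjective a
    rw [toY_of_intCast, map_zsmul, fromY_bY, ← map_zsmul, zsmul_one]

/-- A `p`-adic integer acts on the `p ^ (n+1)`-torsion element `b_n` through an integer congruent to
it modulo `p ^ (n+1)`. -/
lemma C_smul_bY (p : ℕ) [Fact p.Prime] (n : ℕ) (c : PadicInt p) :
    ∃ z : ℕ, (Polynomial.C c : R p) • bY p n = z • bY p n := by
  obtain ⟨d, hd⟩ := Ideal.mem_span_singleton'.mp (PadicInt.appr_spec (n + 1) c)
  refine ⟨c.appr (n + 1), ?_⟩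
  rw [← Nat.cast_smul_eq_nsmul (R p), ← sub_eq_zero, ← sub_smul, ← Polynomial.C_eq_natCast,
    ← Polynomial.C_sub, ← hd, Polynomial.C_mul, mul_smul, Polynomial.C_pow,
    Polynomial.C_eq_natCast, p_pow_smul_bY, smul_zero]

lemma toY_surjective (p : ℕ) [Fact p.Prime] : Function.Surjective (toY p) := by
  rw [← AddMonoidHom.mrange_eq_top, eq_top_iff]
  rintro y -
  obtain ⟨x, rfl⟩ := Submodule.Quotient.mk_surjective _ y
  induction x using Finsupp.induction_linear with
  | zero => exact zero_mem _
  | add f g hf hg => exact add_mem hf hg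
  | single j q =>
    induction q using Polynomial.induction_on' with
    | add f g hf hg =>
      rw [Finsupp.single_add]
      exact add_mem hf hg
    | monomial k c =>
      have h : (Submodule.Quotient.mk (Finsupp.single j (Polynomial.monomial k c)) : Y p)
          = (p ^ k : ℕ) • (Polynomial.C c : R p) • bY p (j + k) := by
        rw [← Nat.cast_smul_eq_nsmul (R p), Nat.cast_pow, smul_comm, ← X_pow_smul_bY, smul_smul,
          bY, ← Submodule.Quotient.mk_smul, Finsupp.smul_single, smul_eq_mul, mul_one,
          Polynomial.C_mul_X_pow_eq_monomial]
      obtain ⟨z, hz⟩ := C_smul_bY p (j + k) c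
      rw [h, hz]
      have hmem : z • bY p (j + k) ∈ AddMonoidHom.mrange (toY p) :=
        ⟨_, (toY_of_intCast p (j + k) z).trans (natCast_zsmul _ _)⟩
      exact nsmul_mem hmem _

/-- as an abelian group, `Y ≅ ⊕_{j ∈ ℕ} ℤ/p^(j+1)`, via an isomorphism
carrying the image of `b_j` to a generator of the summand `ℤ/p^(j+1)`. -/
theorem stmt_3 (p : ℕ) [Fact p.Prime] :
    ∃ e : Y p ≃+ (⨁ j : ℕ, ZMod (p ^ (j + 1))),
      ∀ j : ℕ, ∃ g : ZMod (p ^ (j + 1)),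
        AddSubgroup.zmultiples g = ⊤ ∧
        e (bY p j) = DirectSum.of (fun j : ℕ => ZMod (p ^ (j + 1))) j g := by
  have left : Function.LeftInverse (toY p) (fromY p) := by
    intro y
    obtain ⟨x, rfl⟩ := toY_surjective p y
    rw [fromY_toY]
  refine ⟨{ fromY p with invFun := toY p, left_inv := left, right_inv := fromY_toY p },
    fun j => ⟨1, ?_, fromY_bY p j⟩⟩
  rw [eq_top_iff]
  rintro a -
  obtain ⟨z, rfl⟩ := ZMod.intCast_surjective a
  exact ⟨z, zsmul_one z⟩
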